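/- Let a, b > 0 and Z ~ Beta(a,b). A random variable X with values in [0,1] has the distribution Beta(a,b) if and only if for every continuous function f on [0,1] which is locally absolutely continuous on (0,1) and satisfies E|Z(1−Z)f'(Z)| < ∞, one has E[X(1−X)f'(X)] = (a+b)·E[(X − a/(a+b))·f(X)]. -/

import Mathlib

/-!
Write `p` for the Beta density. The Stein identity rests on
`(x (1 - x) p(x))' = (a - (a + b) x) p(x)` on `(0,1)`: integrating
`(x (1 - x) p f)' = x (1 - x) p f' + (a - (a + b) x) p f` over `(0,1)` gives the identity for the
Beta law, since `x (1 - x) p f` is a multiple of `x ^ a (1 - x) ^ b f`, which vanishes at both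
endpoints (`steinProp_betaMeasure`). As `f` is only absolutely continuous, the integration by
parts uses Lebesgue's differentiation theorem (`integral_by_parts_of_primitive`).

Conversely, the identity for `f(x) = x ^ n` reads `(a + b + n) E[X ^ (n+1)] = (a + n) E[X ^ n]`
(`SteinProp.moment_succ`), so it determines all moments, and a probability measure on `[0,1]` is
determined by its moments (`measure_eq_of_moments_eq`).
-/

open MeasureTheory Set Filter Topology Real

noncomputable section

/-- The Euler Beta function `B(a,b) = ∫_0^1 x^(a-1) (1-x)^(b-1) dx`. -/
def betaFn (a b : ℝ) : ℝ := ∫ x in (0:ℝ)..1, x ^ (a - 1) * (1 - x) ^ (b - 1)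

/-- The density of the Beta distribution with parameters `a, b > 0`. -/
def betaPDF (a b : ℝ) (x : ℝ) : ℝ :=
  Set.indicator (Set.Ioo (0:ℝ) 1) (fun x => x ^ (a - 1) * (1 - x) ^ (b - 1) / betaFn a b) x

/-- The Beta distribution `Beta(a,b)` as a measure on `ℝ`. -/
def betaMeasure (a b : ℝ) : Measure ℝ :=
  volume.withDensity (fun x => ENNReal.ofReal (betaPDF a b x))

/-- `E[h(Z)]` for `Z ∼ Beta(a,b)`. -/
def betaMean (a b : ℝ) (h : ℝ → ℝ) : ℝ := ∫ x, h x * betaPDF a b x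

/-- The distribution function of `Beta(a,b)`. -/
def betaCDF (a b : ℝ) (x : ℝ) : ℝ := ∫ t in Iic x, betaPDF a b t

/-- The constant `C(a,b)` from the bounds on the solution of the Beta Stein equation. -/
def Cst (a b : ℝ) : ℝ :=
  if a = b then
    (if a < 1 then 4 else 2 * a * Real.sqrt π * Real.Gamma a / Real.Gamma (a + 1 / 2))
  else
    2 * (a + b) *
      (if a ≤ 1 ∧ b ≤ 1 then betaFn a b
       else if a ≤ 1 then a⁻¹
       else if b ≤ 1 then b⁻¹
       else (a * b * betaFn a b)⁻¹)

/-- The standard solution `g_h` of the Beta Stein equation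
`x(1-x) g'(x) + (a+b)(a/(a+b) - x) g(x) = h(x) - E[h(Z)]`. -/
def betaG (a b : ℝ) (h : ℝ → ℝ) (x : ℝ) : ℝ :=
  (∫ t in Iic x, (h t - betaMean a b h) * betaPDF a b t) / (x * (1 - x) * betaPDF a b x)

/-- The derivative of the standard solution, defined everywhere via the Stein equation. -/
def betaG' (a b : ℝ) (h : ℝ → ℝ) (x : ℝ) : ℝ :=
  (h x - betaMean a b h - (a + b) * (a / (a + b) - x) * betaG a b h x) / (x * (1 - x))

/-- The hand-made density coincides with Mathlib's; the content is that `betaFn` agrees with the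
Gamma-function expression for the normalizing constant. -/
lemma betaPDF_eq_betaPDFReal {a b : ℝ} (ha : 0 < a) (hb : 0 < b) :
    betaPDF a b = ProbabilityTheory.betaPDFReal a b := by
  have hβ := ProbabilityTheory.beta_pos ha hb
  have hnn : 0 ≤ᵐ[volume] ProbabilityTheory.betaPDFReal a b := by
    refine ae_of_all _ fun x => ?_
    by_cases h : 0 < x ∧ x < 1
    · exact (ProbabilityTheory.betaPDFReal_pos h.1 h.2 ha hb).le
    · simp [ProbabilityTheory.betaPDFReal, h]
  have h1 : ∫ x, ProbabilityTheory.betaPDFReal a b x = 1 := by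
    rw [integral_eq_lintegral_of_nonneg_ae hnn
      (ProbabilityTheory.measurable_betaPDFReal a b).aestronglyMeasurable]
    have := ProbabilityTheory.lintegral_betaPDF_eq_one ha hb
    simp only [ProbabilityTheory.betaPDF] at this
    simp [this]
  have hB : betaFn a b = ProbabilityTheory.beta a b := by
    have h2 : ∫ x, ProbabilityTheory.betaPDFReal a b x
        = (ProbabilityTheory.beta a b)⁻¹ * betaFn a b := by
      rw [betaFn, intervalIntegral.integral_of_le zero_le_one, integral_Ioc_eq_integral_Ioo,
        ← integral_const_mul, ← integral_indicator measurableSet_Ioo]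
      congr 1
      ext x
      by_cases h : x ∈ Ioo (0:ℝ) 1
      · rw [indicator_of_mem h, ProbabilityTheory.betaPDFReal, if_pos (mem_Ioo.1 h)]; ring
      · rw [indicator_of_notMem h, ProbabilityTheory.betaPDFReal, if_neg (mt mem_Ioo.2 h)]
    rw [h2] at h1
    field_simp at h1
    exact h1
  ext x
  by_cases h : x ∈ Ioo (0:ℝ) 1
  · rw [betaPDF, indicator_of_mem h, ProbabilityTheory.betaPDFReal, if_pos (mem_Ioo.1 h), hB]; ring
  · rw [betaPDF, indicator_of_notMem h, ProbabilityTheory.betaPDFReal, if_neg (mt mem_Ioo.2 h)]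

lemma betaPDF_nonneg {a b : ℝ} (ha : 0 < a) (hb : 0 < b) (x : ℝ) : 0 ≤ betaPDF a b x := by
  rw [betaPDF_eq_betaPDFReal ha hb]
  by_cases h : 0 < x ∧ x < 1
  · exact (ProbabilityTheory.betaPDFReal_pos h.1 h.2 ha hb).le
  · simp [ProbabilityTheory.betaPDFReal, h]

lemma betaPDF_measurable {a b : ℝ} (ha : 0 < a) (hb : 0 < b) : Measurable (betaPDF a b) := by
  rw [betaPDF_eq_betaPDFReal ha hb]
  exact ProbabilityTheory.measurable_betaPDFReal a b

lemma betaMeasure_isProbability {a b : ℝ} (ha : 0 < a) (hb : 0 < b) :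
    IsProbabilityMeasure (betaMeasure a b) := by
  have := ProbabilityTheory.isProbabilityMeasureBeta ha hb
  rw [betaMeasure, betaPDF_eq_betaPDFReal ha hb]
  exact this

lemma integrable_betaPDF {a b : ℝ} (ha : 0 < a) (hb : 0 < b) : Integrable (betaPDF a b) := by
  have h := (betaMeasure_isProbability ha hb).measure_univ
  rw [betaMeasure, withDensity_apply _ MeasurableSet.univ, setLIntegral_univ] at h
  refine ⟨(betaPDF_measurable ha hb).aestronglyMeasurable, ?_⟩
  rw [hasFiniteIntegral_iff_ofReal (ae_of_all _ (betaPDF_nonneg ha hb)), h]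
  exact ENNReal.one_lt_top

lemma integrable_betaMeasure_iff {a b : ℝ} (ha : 0 < a) (hb : 0 < b) (g : ℝ → ℝ) :
    Integrable g (betaMeasure a b) ↔ Integrable (fun x => g x * betaPDF a b x) := by
  rw [betaMeasure, integrable_withDensity_iff (betaPDF_measurable ha hb).ennreal_ofReal
    (ae_of_all _ fun _ => ENNReal.ofReal_lt_top)]
  simp only [ENNReal.toReal_ofReal (betaPDF_nonneg ha hb _)]

lemma integral_betaMeasure {a b : ℝ} (ha : 0 < a) (hb : 0 < b) (g : ℝ → ℝ) :
    ∫ x, g x ∂(betaMeasure a b) = ∫ x, g x * betaPDF a b x := by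
  rw [betaMeasure, integral_withDensity_eq_integral_toReal_smul
    (betaPDF_measurable ha hb).ennreal_ofReal (ae_of_all _ fun _ => ENNReal.ofReal_lt_top)]
  simp only [ENNReal.toReal_ofReal (betaPDF_nonneg ha hb _), smul_eq_mul, mul_comm]

lemma betaMeasure_ae_mem {a b : ℝ} : ∀ᵐ x ∂(betaMeasure a b), x ∈ Icc (0:ℝ) 1 := by
  rw [ae_iff, betaMeasure]
  have hs : MeasurableSet {x : ℝ | ¬ x ∈ Icc (0:ℝ) 1} := measurableSet_Icc.compl
  rw [withDensity_apply _ hs, setLIntegral_eq_zero hs]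
  intro x hx
  have : x ∉ Ioo (0:ℝ) 1 := fun h => hx (Ioo_subset_Icc_self h)
  simp [betaPDF, indicator_of_notMem this]

/-- A function with an integrable weak derivative on `[x, y]` may be integrated by parts against
a `C¹` function. -/
lemma integral_by_parts_of_primitive {K k f f' : ℝ → ℝ} {x y : ℝ} (hxy : x ≤ y)
    (hKc : ContDiffOn ℝ 1 K (Icc x y)) (hKd : ∀ t ∈ Icc x y, HasDerivAt K (k t) t)
    (hf'i : IntervalIntegrable f' volume x y)
    (hf : ∀ t ∈ Icc x y, f t - f x = ∫ s in x..t, f' s) :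
    ∫ t in x..y, k t * f t + K t * f' t = K y * f y - K x * f x := by
  set g : ℝ → ℝ := fun t => f x + ∫ s in x..t, f' s with hg
  have hgf : ∀ t ∈ Icc x y, g t = f t := fun t ht => by
    simp only [hg]; rw [← hf t ht]; ring
  have hKac : AbsolutelyContinuousOnInterval K x y :=
    ContDiffOn.absolutelyContinuousOnInterval (by rwa [uIcc_of_le hxy])
  have hgac : AbsolutelyContinuousOnInterval g x y :=
    (ContDiffOn.absolutelyContinuousOnInterval (f := fun _ => f x) contDiffOn_const).fun_add
      (hf'i.absolutelyContinuousOnInterval_intervalIntegral left_mem_uIcc)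
  have key := hKac.integral_deriv_mul_eq_sub hgac
  rw [hgf y ⟨hxy, le_rfl⟩, hgf x ⟨le_rfl, hxy⟩] at key
  rw [← key]
  apply intervalIntegral.integral_congr_ae
  filter_upwards [hf'i.ae_hasDerivAt_integral] with t ht htm
  have htI : t ∈ uIcc x y := uIoc_subset_uIcc htm
  have htI' : t ∈ Icc x y := by rwa [uIcc_of_le hxy] at htI
  rw [(hKd t htI').deriv, hgf t htI', ((ht htI x left_mem_uIcc).const_add (f x)).deriv]

/-- The primitive `x ^ a * (1 - x) ^ b` of `(a - (a + b) x) x ^ (a - 1) (1 - x) ^ (b - 1)`. -/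
lemma hasDerivAt_kernel {a b t : ℝ} (ht : t ∈ Ioo (0:ℝ) 1) :
    HasDerivAt (fun x : ℝ => x ^ a * (1 - x) ^ b)
      ((a - (a + b) * t) * (t ^ (a - 1) * (1 - t) ^ (b - 1))) t := by
  have h0 : 0 < t := ht.1
  have h1 : 0 < 1 - t := sub_pos.2 ht.2
  have hA := Real.hasDerivAt_rpow_const (x := t) (p := a) (Or.inl h0.ne')
  have hB := ((hasDerivAt_id t).const_sub 1).rpow_const (p := b) (Or.inl h1.ne')
  refine (hA.mul hB).congr_deriv ?_
  have ea : t ^ a = t * t ^ (a - 1) := by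
    rw [Real.rpow_sub_one h0.ne']; field_simp
  have eb : (1 - t) ^ b = (1 - t) * (1 - t) ^ (b - 1) := by
    rw [Real.rpow_sub_one h1.ne']; field_simp
  simp only [id]
  rw [ea, eb]
  ring

/-- `SteinProp a b m`: the measure `m` on `ℝ` satisfies the Stein identity of `Beta(a,b)`, with
integrability of both sides, for all admissible pairs `(f, f')`. -/
def SteinProp (a b : ℝ) (m : Measure ℝ) : Prop :=
  ∀ f f' : ℝ → ℝ, Measurable f' →
    ContinuousOn f (Set.Icc (0:ℝ) 1) →
    (∀ x ∈ Set.Ioo (0:ℝ) 1, ∀ y ∈ Set.Ioo (0:ℝ) 1,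
      IntervalIntegrable f' volume x y ∧ f y - f x = ∫ t in x..y, f' t) →
    Integrable (fun x => x * (1 - x) * |f' x| * betaPDF a b x) →
    (Integrable (fun x => x * (1 - x) * f' x) m ∧
     Integrable (fun x => (x - a / (a + b)) * f x) m ∧
     ∫ x, x * (1 - x) * f' x ∂m = (a + b) * ∫ x, (x - a / (a + b)) * f x ∂m)

/-- A function continuous on `[0,1]` is integrable against the Beta density after
multiplication by it. -/
lemma integrable_mul_betaPDF {a b : ℝ} (ha : 0 < a) (hb : 0 < b) {g : ℝ → ℝ}
    (hg : ContinuousOn g (Icc (0:ℝ) 1)) : Integrable (fun x => g x * betaPDF a b x) := by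
  have h1 : IntegrableOn (fun x => g x * betaPDF a b x) (Icc (0:ℝ) 1) :=
    (integrable_betaPDF ha hb).integrableOn.continuousOn_mul hg isCompact_Icc
  refine h1.integrable_of_forall_notMem_eq_zero fun x hx => ?_
  have : x ∉ Ioo (0:ℝ) 1 := fun h => hx (Ioo_subset_Icc_self h)
  simp [betaPDF, indicator_of_notMem this]

/-- The Beta law satisfies its Stein identity. On compact subintervals of `(0,1)` this is
integration by parts, and the boundary terms disappear because `x ^ a * (1 - x) ^ b * f x` is
continuous on `[0,1]` and zero at both ends. -/
lemma steinProp_betaMeasure {a b : ℝ} (ha : 0 < a) (hb : 0 < b) :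
    SteinProp a b (betaMeasure a b) := by
  intro f f' hf'm hfc hfac hf'int
  have hpm := betaPDF_measurable ha hb
  have hi1 : Integrable (fun x => x * (1 - x) * f' x * betaPDF a b x) := by
    refine hf'int.mono (by fun_prop) (ae_of_all _ fun x => ?_)
    simp
  have hi2 : Integrable (fun x => (x - a / (a + b)) * f x * betaPDF a b x) :=
    integrable_mul_betaPDF ha hb (by fun_prop)
  refine ⟨(integrable_betaMeasure_iff ha hb _).2 hi1, (integrable_betaMeasure_iff ha hb _).2 hi2,
    ?_⟩
  rw [integral_betaMeasure ha hb, integral_betaMeasure ha hb]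
  set B := betaFn a b with hB
  set K : ℝ → ℝ := fun x => x ^ a * (1 - x) ^ b with hK
  set k : ℝ → ℝ := fun t => (a - (a + b) * t) * (t ^ (a - 1) * (1 - t) ^ (b - 1)) with hk
  set H : ℝ → ℝ := fun x => x * (1 - x) * f' x * betaPDF a b x
    - (a + b) * ((x - a / (a + b)) * f x * betaPDF a b x) with hH
  have hHi : Integrable H := hi1.sub (hi2.const_mul (a + b))
  have hab : a + b ≠ 0 := by positivity
  -- Up to the constant `B⁻¹`, the integrand is the derivative of `K * f`.
  have hHeq : ∀ t ∈ Ioo (0:ℝ) 1, H t = B⁻¹ * (k t * f t + K t * f' t) := by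
    intro t ht
    have h0 : 0 < t := ht.1
    have h1 : 0 < 1 - t := sub_pos.2 ht.2
    have ea : t ^ a = t * t ^ (a - 1) := by
      rw [Real.rpow_sub_one h0.ne']; field_simp
    have eb : (1 - t) ^ b = (1 - t) * (1 - t) ^ (b - 1) := by
      rw [Real.rpow_sub_one h1.ne']; field_simp
    simp only [hH, hK, hk, betaPDF, indicator_of_mem ht, ← hB]
    rw [ea, eb]
    have e : (a + b) * (t - a / (a + b)) = (a + b) * t - a := by field_simp
    linear_combination (-(f t * (t ^ (a - 1) * (1 - t) ^ (b - 1) / B))) * e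
  have hstep : ∀ x ∈ Ioo (0:ℝ) 1, ∀ y ∈ Ioo (0:ℝ) 1, x ≤ y →
      ∫ t in x..y, H t = B⁻¹ * (K y * f y) - B⁻¹ * (K x * f x) := by
    intro x hx y hy hxy
    have hsub : Icc x y ⊆ Ioo (0:ℝ) 1 := fun t ht => ⟨hx.1.trans_le ht.1, ht.2.trans_lt hy.2⟩
    have h1 : ∫ t in x..y, H t = ∫ t in x..y, B⁻¹ * (k t * f t + K t * f' t) := by
      apply intervalIntegral.integral_congr
      intro t ht
      rw [uIcc_of_le hxy] at ht
      exact hHeq t (hsub ht)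
    rw [h1, intervalIntegral.integral_const_mul,
      integral_by_parts_of_primitive hxy (K := K) (k := k) (f := f) ?_
        (fun t ht => hasDerivAt_kernel (hsub ht)) (hfac x hx y hy).1
        (fun t ht => (hfac x hx t (hsub ht)).2)]
    · ring
    · intro t ht
      have h0 : t ≠ 0 := (hsub ht).1.ne'
      have h1 : 1 - t ≠ 0 := (sub_pos.2 (hsub ht).2).ne'
      refine ContDiffAt.contDiffWithinAt ?_
      exact (contDiffAt_id.rpow_const_of_ne h0).mul
        ((contDiffAt_const.sub contDiffAt_id).rpow_const_of_ne h1)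
  have hKc : Continuous K := by
    refine (Real.continuous_rpow_const ha.le).mul ?_
    exact (Real.continuous_rpow_const hb.le).comp (continuous_const.sub continuous_id)
  -- `∫₀ˣ H - K f / B` is continuous on `[0,1]` and constant on `(0,1)`, hence constant on `[0,1]`.
  set Q : ℝ → ℝ := fun x => (∫ t in (0:ℝ)..x, H t) - B⁻¹ * (K x * f x) with hQ
  have hQc : ContinuousOn Q (Icc (0:ℝ) 1) := by
    refine ContinuousOn.sub ?_ (continuousOn_const.mul (hKc.continuousOn.mul hfc))
    exact (intervalIntegral.continuous_primitive
      (fun u v => hHi.intervalIntegrable) 0).continuousOn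
  have hQle : ∀ x ∈ Ioo (0:ℝ) 1, ∀ y ∈ Ioo (0:ℝ) 1, x ≤ y → Q y = Q x := by
    intro x hx y hy hxy
    have h1 := hstep x hx y hy hxy
    have h2 := intervalIntegral.integral_add_adjacent_intervals
      (hHi.intervalIntegrable (a := 0) (b := x)) (hHi.intervalIntegrable (a := x) (b := y))
    simp only [hQ]
    linarith
  have hhalf : (1/2 : ℝ) ∈ Ioo (0:ℝ) 1 := by norm_num
  have hQconst : EqOn Q (fun _ => Q (1/2)) (Icc (0:ℝ) 1) := by
    refine EqOn.of_subset_closure (s := Ioo (0:ℝ) 1) ?_ hQc continuousOn_const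
      Ioo_subset_Icc_self (by rw [closure_Ioo zero_ne_one])
    intro x hx
    rcases le_total x (1/2) with h | h
    · exact (hQle x hx _ hhalf h).symm
    · exact hQle _ hhalf x hx h
  have h01 : Q 1 = Q 0 :=
    (hQconst (right_mem_Icc.2 zero_le_one)).trans (hQconst (left_mem_Icc.2 zero_le_one)).symm
  have hzero : ∫ t in (0:ℝ)..1, H t = 0 := by
    simpa [hQ, hK, Real.zero_rpow ha.ne', Real.zero_rpow hb.ne'] using h01
  have hfull : ∫ t, H t = 0 := by
    rw [← hzero, intervalIntegral.integral_of_le zero_le_one, integral_Ioc_eq_integral_Ioo,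
      setIntegral_eq_integral_of_forall_compl_eq_zero]
    intro x hx
    simp [hH, betaPDF, indicator_of_notMem hx]
  rw [hH, integral_sub hi1 (hi2.const_mul (a + b)), integral_const_mul] at hfull
  linarith

/-- Testing the Stein identity on `x ^ n` gives a first-order recursion for the moments. -/
lemma SteinProp.moment_succ {a b : ℝ} (ha : 0 < a) (hb : 0 < b) {m : Measure ℝ}
    [IsProbabilityMeasure m] (hm : ∀ᵐ x ∂m, x ∈ Icc (0:ℝ) 1) (h : SteinProp a b m) (n : ℕ) :
    (a + b + n) * ∫ x, x ^ (n + 1) ∂m = (a + n) * ∫ x, x ^ n ∂m := by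
  have hmi : ∀ j : ℕ, Integrable (fun x : ℝ => x ^ j) m := fun j => by
    refine Integrable.of_bound (by fun_prop) 1 ?_
    filter_upwards [hm] with x hx
    rw [norm_pow, Real.norm_eq_abs, abs_of_nonneg hx.1]
    exact pow_le_one₀ hx.1 hx.2
  have hd : ∀ x : ℝ, HasDerivAt (fun x : ℝ => x ^ n) (n * x ^ (n - 1)) x :=
    fun x => hasDerivAt_pow n x
  obtain ⟨-, -, he⟩ := h (fun x => x ^ n) (fun x => n * x ^ (n - 1)) (by fun_prop)
    (by fun_prop)
    (fun x _ y _ => by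
      have hi : IntervalIntegrable (fun x : ℝ => (n:ℝ) * x ^ (n - 1)) volume x y :=
        Continuous.intervalIntegrable (by fun_prop) _ _
      exact ⟨hi, (intervalIntegral.integral_eq_sub_of_hasDerivAt (fun t _ => hd t) hi).symm⟩)
    (integrable_mul_betaPDF ha hb (by fun_prop))
  have e1 : ∀ x : ℝ, x * (1 - x) * (n * x ^ (n - 1)) = n * (x ^ n - x ^ (n + 1)) := by
    intro x
    cases n with
    | zero => simp
    | succ j => simp only [Nat.add_sub_cancel]; ring
  have e2 : ∀ x : ℝ, (x - a / (a + b)) * x ^ n = x ^ (n + 1) - a / (a + b) * x ^ n := by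
    intro x; ring
  simp only [e1, e2] at he
  rw [integral_const_mul, integral_sub (hmi _) (hmi _),
    integral_sub (hmi _) ((hmi _).const_mul _), integral_const_mul] at he
  have hab : a + b ≠ 0 := by positivity
  field_simp at he
  linarith

/-- The Hausdorff moment problem is determinate: by Weierstrass approximation, a probability
measure on `[0,1]` is determined by its moments. -/
lemma measure_eq_of_moments_eq {m₁ m₂ : Measure ℝ} [IsProbabilityMeasure m₁]
    [IsProbabilityMeasure m₂] (h₁ : ∀ᵐ x ∂m₁, x ∈ Icc (0:ℝ) 1)
    (h₂ : ∀ᵐ x ∂m₂, x ∈ Icc (0:ℝ) 1) (h : ∀ n : ℕ, ∫ x, x ^ n ∂m₁ = ∫ x, x ^ n ∂m₂) :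
    m₁ = m₂ := by
  have hpi : ∀ (m : Measure ℝ) [IsProbabilityMeasure m], (∀ᵐ x ∂m, x ∈ Icc (0:ℝ) 1) →
      ∀ j : ℕ, Integrable (fun x : ℝ => x ^ j) m := fun m _ hm j => by
    refine Integrable.of_bound (by fun_prop) 1 ?_
    filter_upwards [hm] with x hx
    rw [norm_pow, Real.norm_eq_abs, abs_of_nonneg hx.1]
    exact pow_le_one₀ hx.1 hx.2
  have hpoly : ∀ (m : Measure ℝ) [IsProbabilityMeasure m], (∀ᵐ x ∂m, x ∈ Icc (0:ℝ) 1) →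
      ∀ p : Polynomial ℝ, Integrable (fun x => p.eval x) m ∧
        ∫ x, p.eval x ∂m = ∑ i ∈ Finset.range (p.natDegree + 1), p.coeff i * ∫ x, x ^ i ∂m := by
    intro m _ hm p
    simp only [Polynomial.eval_eq_sum_range]
    refine ⟨integrable_finsetSum _ fun i _ => (hpi m hm i).const_mul _, ?_⟩
    rw [integral_finsetSum _ fun i _ => (hpi m hm i).const_mul _]
    simp only [integral_const_mul]
  have happrox : ∀ (m : Measure ℝ) [IsProbabilityMeasure m], (∀ᵐ x ∂m, x ∈ Icc (0:ℝ) 1) →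
      ∀ (f : BoundedContinuousFunction ℝ ℝ) (p : Polynomial ℝ) (ε : ℝ),
      (∀ x ∈ Icc (0:ℝ) 1, |p.eval x - f x| < ε) →
      |∫ x, p.eval x ∂m - ∫ x, f x ∂m| ≤ ε := by
    intro m _ hm f p ε hp
    rw [← integral_sub (hpoly m hm p).1 (f.integrable m)]
    have := norm_integral_le_of_norm_le_const (μ := m) (C := ε)
      (f := fun x => p.eval x - f x) (by filter_upwards [hm] with x hx using (hp x hx).le)
    simpa using this
  refine ext_of_forall_integral_eq_of_IsFiniteMeasure fun f => ?_
  refine eq_of_forall_dist_le fun ε hε => ?_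
  obtain ⟨p, hp⟩ := exists_polynomial_near_of_continuousOn 0 1 f f.continuous.continuousOn (ε / 2)
    (half_pos hε)
  have b1 := happrox m₁ h₁ f p _ hp
  have b2 := happrox m₂ h₂ f p _ hp
  have e : ∫ x, p.eval x ∂m₁ = ∫ x, p.eval x ∂m₂ := by
    rw [(hpoly m₁ h₁ p).2, (hpoly m₂ h₂ p).2]
    simp only [h]
  rw [e] at b1
  rw [Real.dist_eq]
  rw [abs_le] at *
  constructor <;> linarith [b1.1, b1.2, b2.1, b2.2]

lemma SteinProp.eq_betaMeasure {a b : ℝ} (ha : 0 < a) (hb : 0 < b) {m : Measure ℝ}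
    [IsProbabilityMeasure m] (hm : ∀ᵐ x ∂m, x ∈ Icc (0:ℝ) 1) (h : SteinProp a b m) :
    m = betaMeasure a b := by
  have := betaMeasure_isProbability ha hb
  refine measure_eq_of_moments_eq hm betaMeasure_ae_mem fun n => ?_
  induction n with
  | zero => simp
  | succ n ih =>
    have e1 := h.moment_succ ha hb hm n
    have e2 := (steinProp_betaMeasure ha hb).moment_succ ha hb betaMeasure_ae_mem n
    have hpos : a + b + n ≠ 0 := by positivity
    rw [ih, ← e2] at e1
    exact mul_left_cancel₀ hpos e1

/-- Stein characterization of the Beta distribution: `X` with values in `[0,1]` has law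
`Beta(a,b)` iff `E[X(1-X)f'(X)] = (a+b) E[(X - a/(a+b)) f(X)]` for every continuous `f` on
`[0,1]` which is locally absolutely continuous on `(0,1)` with `E|Z(1-Z)f'(Z)| < ∞`. -/
theorem beta_stein_characterization
    {Ω : Type*} [MeasurableSpace Ω] (μ : Measure Ω) [IsProbabilityMeasure μ]
    (a b : ℝ) (ha : 0 < a) (hb : 0 < b)
    (X : Ω → ℝ) (hX : Measurable X) (hXval : ∀ ω, X ω ∈ Set.Icc (0:ℝ) 1) :
    μ.map X = betaMeasure a b ↔
    ∀ f f' : ℝ → ℝ, Measurable f' →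
      ContinuousOn f (Set.Icc (0:ℝ) 1) →
      (∀ x ∈ Set.Ioo (0:ℝ) 1, ∀ y ∈ Set.Ioo (0:ℝ) 1,
        IntervalIntegrable f' volume x y ∧ f y - f x = ∫ t in x..y, f' t) →
      MeasureTheory.Integrable (fun x => x * (1 - x) * |f' x| * betaPDF a b x) →
      (MeasureTheory.Integrable (fun ω => X ω * (1 - X ω) * f' (X ω)) μ ∧
       MeasureTheory.Integrable (fun ω => (X ω - a / (a + b)) * f (X ω)) μ ∧
       ∫ ω, X ω * (1 - X ω) * f' (X ω) ∂μ =
         (a + b) * ∫ ω, (X ω - a / (a + b)) * f (X ω) ∂μ) := by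
  have hμ : IsProbabilityMeasure (μ.map X) := Measure.isProbabilityMeasure_map hX.aemeasurable
  have hsupp : ∀ᵐ x ∂(μ.map X), x ∈ Icc (0:ℝ) 1 :=
    (ae_map_iff (p := fun x => x ∈ Icc (0:ℝ) 1) hX.aemeasurable measurableSet_Icc).2
      (ae_of_all _ hXval)
  constructor
  · intro h f f' hf'm hfc hfac hf'int
    obtain ⟨i1, i2, e⟩ := steinProp_betaMeasure ha hb f f' hf'm hfc hfac hf'int
    rw [← h] at i1 i2 e
    refine ⟨i1.comp_measurable hX, i2.comp_measurable hX, ?_⟩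
    rw [integral_map hX.aemeasurable i1.aestronglyMeasurable,
      integral_map hX.aemeasurable i2.aestronglyMeasurable] at e
    exact e
  · intro h
    refine SteinProp.eq_betaMeasure ha hb hsupp ?_
    intro f f' hf'm hfc hfac hf'int
    obtain ⟨i1, i2, e⟩ := h f f' hf'm hfc hfac hf'int
    have m1 : AEStronglyMeasurable (fun x => x * (1 - x) * f' x) (μ.map X) := by fun_prop
    -- `f` is only assumed continuous on `[0,1]`, so its measurability under the law of `X`
    -- uses that this law is carried by `[0,1]`.
    have m2 : AEStronglyMeasurable (fun x => (x - a / (a + b)) * f x) (μ.map X) := by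
      have hr : (μ.map X).restrict (Icc (0:ℝ) 1) = μ.map X :=
        Measure.restrict_eq_self_of_ae_mem hsupp
      rw [← hr]
      exact ContinuousOn.aestronglyMeasurable (by fun_prop) measurableSet_Icc
    refine ⟨(integrable_map_measure m1 hX.aemeasurable).2 i1,
      (integrable_map_measure m2 hX.aemeasurable).2 i2, ?_⟩
    rw [integral_map hX.aemeasurable m1, integral_map hX.aemeasurable m2]
    exact e

end
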